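/- Suppose {φ_m} ⊂ N_KdV is a minimising sequence for E_KdV, i.e. E_KdV(φ_m) → c_KdV as m → ∞. Then there exist a sequence {x_m} of real numbers, a strictly increasing sequence of indices m_j, and y ∈ ℝ such that φ_{m_j}(· + x_{m_j}) converges to φ_KdV(· + y) in H¹(ℝ), that is, ∫ |φ_{m_j}(x + x_{m_j}) − φ_KdV(x + y)|² dx + ∫ |φ′_{m_j}(x + x_{m_j}) − φ_KdV′(x + y)|² dx → 0 as j → ∞. -/

import Mathlib

open MeasureTheory Filter

noncomputable def sech (x : ℝ) : ℝ := 1 / Real.cosh x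

/-- `H1Pair φ φ'` expresses that `φ` belongs to `H¹(ℝ)` with weak derivative `φ'`. -/
def H1Pair (φ φ' : ℝ → ℝ) : Prop :=
  Continuous φ ∧ Integrable (fun x => (φ x) ^ 2) ∧ Integrable (fun x => (φ' x) ^ 2) ∧
    ∀ a b : ℝ, a ≤ b → φ b - φ a = ∫ t in a..b, φ' t

/-- The Korteweg–de Vries energy `E_KdV(φ) = (1/2)∫ (c φ'² + d φ³) dx`. -/
noncomputable def EKdV (c d : ℝ) (φ φ' : ℝ → ℝ) : ℝ :=
  (1 / 2) * ∫ x : ℝ, (c * (φ' x) ^ 2 + d * (φ x) ^ 3)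

/-!
Replace `φ` by `u = -φ`, translated so that its maximum is attained at `0`. On each half-line the
energy plus the mass term with multiplier `k² u(0)` is, up to a boundary term depending only on
`u(0)`, the square integral of `u' ± k u √(u(0) - u)`. For prescribed mass the energy therefore
exceeds its minimum by the two squares plus a term controlling `(√u(0) - a)²`. Along a minimising
sequence both squares tend to zero, so `u` nearly satisfies the first-order equation of the soliton
and a comparison argument bounds it below, pointwise in the limit, by the soliton. Since the masses
agree, this forces convergence in `L²`. Expanding the energy at the soliton to second order, the
`L²` convergence and that of the energies give convergence of the derivatives.
-/

open Topology Set

/-! ### Convergence in `L²` -/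

section SquareIntegrable

variable {α ι : Type*} [MeasurableSpace α] {μ : Measure α} {l : Filter ι}

lemma abs_integral_le_sqrt_measureReal_mul_sqrt_integral_sq [IsFiniteMeasure μ] {f : α → ℝ}
    (hf : MemLp f 2 μ) : |∫ x, f x ∂μ| ≤ √(μ.real univ) * √(∫ x, f x ^ 2 ∂μ) := by
  have holder := integral_mul_le_Lp_mul_Lq_of_nonneg (μ := μ) (f := fun _ => (1 : ℝ))
    (g := fun x => |f x|) Real.HolderConjugate.two_two (Eventually.of_forall fun _ => zero_le_one)
    (Eventually.of_forall fun x => abs_nonneg (f x)) (memLp_const 1)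
    (by simpa using! hf.abs)
  refine abs_integral_le_integral_abs.trans ?_
  simpa [Real.sqrt_eq_rpow] using holder

lemma abs_mul_le_min_add_mul_sq {δ : ℝ} (hδ : 0 < δ) (x y : ℝ) :
    |x * y| ≤ min |x * y| (δ⁻¹ * x ^ 2) + δ * y ^ 2 := by
  rcases le_total |x * y| (δ⁻¹ * x ^ 2) with h | h
  · rw [min_eq_left h]
    exact le_add_of_nonneg_right (by positivity)
  · have amgm : 2 * |x * y| ≤ δ⁻¹ * x ^ 2 + δ * y ^ 2 := by
      have h2 : δ⁻¹ * (|x| - δ * |y|) ^ 2 = δ⁻¹ * x ^ 2 + δ * y ^ 2 - 2 * |x * y| := by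
        rw [abs_mul, ← sq_abs x, ← sq_abs y]
        field_simp
        ring
      have : 0 ≤ δ⁻¹ * (|x| - δ * |y|) ^ 2 := by positivity
      linarith
    rw [min_eq_right h]
    linarith [abs_nonneg (x * y)]

lemma tendsto_integral_min_abs_mul_of_ae_tendsto_zero [l.IsCountablyGenerated]
    {f h : α → ℝ} {g : ι → α → ℝ}
    (hfg : ∀ m, AEStronglyMeasurable (fun x => f x * g m x) μ) (hh : Integrable h μ)
    (h_nonneg : ∀ x, 0 ≤ h x) (hlim : ∀ᵐ x ∂μ, Tendsto (fun m => g m x) l (𝓝 0)) :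
    Tendsto (fun m => ∫ x, min |f x * g m x| (h x) ∂μ) l (𝓝 0) := by
  rw [← integral_zero α ℝ (μ := μ)]
  refine tendsto_integral_filter_of_dominated_convergence h
    (Eventually.of_forall fun m => (hfg m).norm.inf hh.1)
    (Eventually.of_forall fun m => Eventually.of_forall fun x => ?_) hh ?_
  · rw [Real.norm_of_nonneg (le_min (abs_nonneg _) (h_nonneg x))]
    exact min_le_right _ _
  · filter_upwards [hlim] with x hx
    have := (hx.const_mul (f x)).abs.min (tendsto_const_nhds (x := h x))
    rwa [mul_zero, abs_zero, min_eq_left (h_nonneg x)] at this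

lemma tendsto_integral_mul_of_ae_tendsto_zero [l.IsCountablyGenerated]
    {f : α → ℝ} {g : ι → α → ℝ} {C : ℝ}
    (hf : MemLp f 2 μ) (hg : ∀ m, MemLp (g m) 2 μ) (hC : ∀ m, ∫ x, g m x ^ 2 ∂μ ≤ C)
    (hlim : ∀ᵐ x ∂μ, Tendsto (fun m => g m x) l (𝓝 0)) :
    Tendsto (fun m => ∫ x, f x * g m x ∂μ) l (𝓝 0) := by
  have hfg : ∀ m, Integrable (fun x => f x * g m x) μ := fun m => hf.integrable_mul (hg m)
  have hbound : ∀ δ > 0, ∀ m,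
      |∫ x, f x * g m x ∂μ| ≤ (∫ x, min |f x * g m x| (δ⁻¹ * f x ^ 2) ∂μ) + δ * C := by
    intro δ hδ m
    have hmin : Integrable (fun x => min |f x * g m x| (δ⁻¹ * f x ^ 2)) μ :=
      (hfg m).abs.inf (hf.integrable_sq.const_mul δ⁻¹)
    have hsq := (hg m).integrable_sq.const_mul δ
    calc |∫ x, f x * g m x ∂μ|
        ≤ ∫ x, |f x * g m x| ∂μ := abs_integral_le_integral_abs
      _ ≤ ∫ x, (min |f x * g m x| (δ⁻¹ * f x ^ 2) + δ * g m x ^ 2) ∂μ :=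
          integral_mono (hfg m).abs (hmin.add hsq) fun x => abs_mul_le_min_add_mul_sq hδ _ _
      _ = (∫ x, min |f x * g m x| (δ⁻¹ * f x ^ 2) ∂μ) + δ * ∫ x, g m x ^ 2 ∂μ := by
          rw [integral_add hmin hsq, integral_const_mul]
      _ ≤ _ := by gcongr; exact hC m
  rw [tendsto_zero_iff_abs_tendsto_zero, tendsto_order]
  refine ⟨fun b hb => Eventually.of_forall fun m => hb.trans_le (abs_nonneg _), fun ε hε => ?_⟩
  obtain ⟨δ, hδ, hδC⟩ : ∃ δ > 0, δ * C < ε / 2 := by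
    refine ⟨ε / (2 * (|C| + 1)), by positivity, ?_⟩
    rw [div_mul_eq_mul_div, div_lt_div_iff₀ (by positivity) two_pos]
    nlinarith [le_abs_self C]
  have hmin_lim := tendsto_integral_min_abs_mul_of_ae_tendsto_zero (fun m => (hfg m).1)
    (hf.integrable_sq.const_mul δ⁻¹) (fun x => by positivity) hlim
  filter_upwards [hmin_lim.eventually_lt_const (half_pos hε)] with m hm
  exact (hbound δ hδ m).trans_lt (by linarith)

lemma tendsto_integral_sub_sq_of_ae_tendsto_max_sub [l.IsCountablyGenerated]
    {f : α → ℝ} {u : ι → α → ℝ}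
    (hf : MemLp f 2 μ) (f_nonneg : ∀ x, 0 ≤ f x) (hu : ∀ m, MemLp (u m) 2 μ)
    (hmass : ∀ m, ∫ x, u m x ^ 2 ∂μ ≤ ∫ x, f x ^ 2 ∂μ)
    (hlim : ∀ᵐ x ∂μ, Tendsto (fun m => max (f x - u m x) 0) l (𝓝 0)) :
    Tendsto (fun m => ∫ x, (u m x - f x) ^ 2 ∂μ) l (𝓝 0) := by
  have hr : ∀ m, MemLp (fun x => max (f x - u m x) 0) 2 μ := fun m =>
    (hf.sub (hu m)).sup MemLp.zero
  have hfr : ∀ m, Integrable (fun x => f x * max (f x - u m x) 0) μ := fun m =>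
    hf.integrable_mul (hr m)
  have hr_bound : ∀ m, ∫ x, max (f x - u m x) 0 ^ 2 ∂μ ≤ 4 * ∫ x, f x ^ 2 ∂μ := by
    intro m
    have hsum := (hf.integrable_sq.const_mul 2).add ((hu m).integrable_sq.const_mul 2)
    calc ∫ x, max (f x - u m x) 0 ^ 2 ∂μ
        ≤ ∫ x, (2 * f x ^ 2 + 2 * u m x ^ 2) ∂μ := by
          refine integral_mono (hr m).integrable_sq hsum fun x => ?_
          rcases max_choice (f x - u m x) 0 with h | h <;> simp only [h] <;>
            nlinarith [sq_nonneg (f x + u m x), sq_nonneg (f x), sq_nonneg (u m x)]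
      _ = 2 * (∫ x, f x ^ 2 ∂μ) + 2 * ∫ x, u m x ^ 2 ∂μ := by
          rw [integral_add (hf.integrable_sq.const_mul 2) ((hu m).integrable_sq.const_mul 2),
            integral_const_mul, integral_const_mul]
      _ ≤ _ := by linarith [hmass m]
  have hle : ∀ m, ∫ x, (u m x - f x) ^ 2 ∂μ ≤ 2 * ∫ x, f x * max (f x - u m x) 0 ∂μ := by
    intro m
    have hsub : Integrable (fun x => u m x ^ 2 - f x ^ 2) μ :=
      (hu m).integrable_sq.sub hf.integrable_sq
    calc ∫ x, (u m x - f x) ^ 2 ∂μ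
        ≤ ∫ x, ((u m x ^ 2 - f x ^ 2) + 2 * (f x * max (f x - u m x) 0)) ∂μ := by
          refine integral_mono ((hu m).sub hf).integrable_sq (hsub.add ((hfr m).const_mul 2))
            fun x => ?_
          change (u m x - f x) ^ 2 ≤ _
          nlinarith [mul_le_mul_of_nonneg_left (le_max_left (f x - u m x) 0) (f_nonneg x)]
      _ = ((∫ x, u m x ^ 2 ∂μ) - ∫ x, f x ^ 2 ∂μ) + 2 * ∫ x, f x * max (f x - u m x) 0 ∂μ := by
          rw [integral_add hsub ((hfr m).const_mul 2),
            integral_sub (hu m).integrable_sq hf.integrable_sq, integral_const_mul]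
      _ ≤ _ := by linarith [hmass m]
  refine squeeze_zero (fun m => integral_nonneg fun x => sq_nonneg _) hle ?_
  simpa using (tendsto_integral_mul_of_ae_tendsto_zero hf hr hr_bound hlim).const_mul 2

end SquareIntegrable

/-! ### Functions in `H¹(ℝ)` -/

lemma absolutelyContinuousOnInterval_comp_of_lipschitzOnWith {f G : ℝ → ℝ} {s : Set ℝ} {a b : ℝ}
    {K : NNReal} (hG : LipschitzOnWith K G s) (hf : AbsolutelyContinuousOnInterval f a b)
    (hs : MapsTo f (uIcc a b) s) : AbsolutelyContinuousOnInterval (G ∘ f) a b := by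
  refine squeeze_zero' ?_ ?_ (by simpa using Tendsto.const_mul (K : ℝ) hf)
  · exact Eventually.of_forall fun _ => Finset.sum_nonneg fun _ _ => dist_nonneg
  · rw [eventually_inf_principal]
    filter_upwards with I hI
    rw [Finset.mul_sum]
    exact Finset.sum_le_sum fun i hi =>
      hG.dist_le_mul _ (hs (hI.left i hi).left) _ (hs (hI.left i hi).right)

/-- `IsH1 u v` says that `u ∈ H¹(ℝ)` with weak derivative `v`. Unlike in `H1Pair`, the function `v`
is required to be measurable, so that none of its interval integrals takes a junk value. -/
structure IsH1 (u v : ℝ → ℝ) : Prop where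
  continuous : Continuous u
  memLp : MemLp u 2
  memLp_deriv : MemLp v 2
  sub_eq_integral : ∀ a b : ℝ, u b - u a = ∫ t in a..b, v t

namespace IsH1

variable {u v f g : ℝ → ℝ}

lemma of_hasDerivAt (hderiv : ∀ x, HasDerivAt u (v x) x) (hv : Continuous v) (hu2 : MemLp u 2)
    (hv2 : MemLp v 2) : IsH1 u v where
  continuous := continuous_iff_continuousAt.2 fun x => (hderiv x).continuousAt
  memLp := hu2
  memLp_deriv := hv2
  sub_eq_integral a b := (intervalIntegral.integral_eq_sub_of_hasDerivAt (fun x _ => hderiv x)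
    (hv.intervalIntegrable a b)).symm

lemma neg (h : IsH1 u v) : IsH1 (fun t => -u t) (fun t => -v t) where
  continuous := h.continuous.neg
  memLp := h.memLp.neg
  memLp_deriv := h.memLp_deriv.neg
  sub_eq_integral a b := by
    rw [intervalIntegral.integral_neg, ← h.sub_eq_integral, neg_sub_neg, neg_sub]

lemma comp_neg (h : IsH1 u v) : IsH1 (fun t => u (-t)) (fun t => -v (-t)) where
  continuous := h.continuous.comp continuous_neg
  memLp := h.memLp.comp_measurePreserving (Measure.measurePreserving_neg volume)
  memLp_deriv :=
    (h.memLp_deriv.comp_measurePreserving (Measure.measurePreserving_neg volume)).neg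
  sub_eq_integral a b := by
    rw [intervalIntegral.integral_neg, intervalIntegral.integral_comp_neg, ← h.sub_eq_integral,
      neg_sub]

lemma comp_add_right (h : IsH1 u v) (x : ℝ) : IsH1 (fun t => u (t + x)) (fun t => v (t + x)) where
  continuous := h.continuous.comp (continuous_add_const x)
  memLp := h.memLp.comp_measurePreserving (measurePreserving_add_right volume x)
  memLp_deriv := h.memLp_deriv.comp_measurePreserving (measurePreserving_add_right volume x)
  sub_eq_integral a b := by
    rw [intervalIntegral.integral_comp_add_right, ← h.sub_eq_integral]

lemma locallyIntegrable_deriv (h : IsH1 u v) : LocallyIntegrable v :=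
  h.memLp_deriv.locallyIntegrable one_le_two

lemma intervalIntegrable_deriv (h : IsH1 u v) (a b : ℝ) : IntervalIntegrable v volume a b :=
  (h.locallyIntegrable_deriv.integrableOn_isCompact isCompact_uIcc).intervalIntegrable

lemma sub (hu : IsH1 u v) (hf : IsH1 f g) : IsH1 (fun t => u t - f t) (fun t => v t - g t) where
  continuous := hu.continuous.sub hf.continuous
  memLp := hu.memLp.sub hf.memLp
  memLp_deriv := hu.memLp_deriv.sub hf.memLp_deriv
  sub_eq_integral a b := by
    rw [intervalIntegral.integral_sub (hu.intervalIntegrable_deriv a b)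
      (hf.intervalIntegrable_deriv a b), ← hu.sub_eq_integral, ← hf.sub_eq_integral]
    ring

lemma eq_integral_add_const (h : IsH1 u v) (a : ℝ) : u = fun x => (∫ t in a..x, v t) + u a := by
  funext x
  rw [← h.sub_eq_integral, sub_add_cancel]

lemma absolutelyContinuousOnInterval (h : IsH1 u v) (a b : ℝ) :
    AbsolutelyContinuousOnInterval u a b := by
  rw [h.eq_integral_add_const a]
  exact ((h.intervalIntegrable_deriv a b).absolutelyContinuousOnInterval_intervalIntegral
    left_mem_uIcc).add (LipschitzWith.const (u a)).lipschitzOnWith.absolutelyContinuousOnInterval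

lemma ae_hasDerivAt (h : IsH1 u v) : ∀ᵐ x, HasDerivAt u (v x) x := by
  filter_upwards [LocallyIntegrable.ae_hasDerivAt_integral h.locallyIntegrable_deriv] with x hx
  rw [h.eq_integral_add_const 0]
  exact (hx 0).add_const _

lemma comp_sub_comp_eq_integral (h : IsH1 u v) {G G' : ℝ → ℝ} (hG : ∀ x, HasDerivAt G (G' x) x)
    (hG' : Continuous G') (a b : ℝ) : G (u b) - G (u a) = ∫ t in a..b, G' (u t) * v t := by
  have hG1 : ContDiff ℝ 1 G :=
    contDiff_one_iff_deriv.2 ⟨fun x => (hG x).differentiableAt,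
      by rwa [show deriv G = G' from funext fun x => (hG x).deriv]⟩
  obtain ⟨C, hC⟩ := (h.absolutelyContinuousOnInterval a b).exists_bound
  obtain ⟨K, hK⟩ := hG1.contDiffOn.exists_lipschitzOnWith (s := Icc (-C) C) one_ne_zero
    (convex_Icc _ _) isCompact_Icc
  have hac := absolutelyContinuousOnInterval_comp_of_lipschitzOnWith hK
    (h.absolutelyContinuousOnInterval a b) fun x hx => abs_le.1 (hC x hx)
  rw [← Function.comp_apply (f := G), ← Function.comp_apply (f := G) (x := a),
    ← hac.integral_deriv_eq_sub]
  refine intervalIntegral.integral_congr_ae ?_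
  filter_upwards [h.ae_hasDerivAt] with x hx _
  exact ((hG (u x)).comp x hx).deriv

lemma mul_sub_mul_eq_integral (hu : IsH1 u v) (hf : IsH1 f g) (a b : ℝ) :
    u b * f b - u a * f a = ∫ t in a..b, (v t * f t + u t * g t) := by
  rw [← (hu.absolutelyContinuousOnInterval a b).integral_deriv_mul_eq_sub
    (hf.absolutelyContinuousOnInterval a b)]
  refine intervalIntegral.integral_congr_ae ?_
  filter_upwards [hu.ae_hasDerivAt, hf.ae_hasDerivAt] with x hux hfx _
  rw [hux.deriv, hfx.deriv]

lemma integrable_mul_add_mul (hu : IsH1 u v) (hf : IsH1 f g) :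
    Integrable (fun t => v t * f t + u t * g t) :=
  (hu.memLp_deriv.integrable_mul hf.memLp).add (hu.memLp.integrable_mul hf.memLp_deriv)

lemma tendsto_atTop (h : IsH1 u v) : Tendsto u atTop (𝓝 0) := by
  have hsq : Tendsto (fun x => u x * u x) atTop
      (𝓝 ((∫ t in Ioi 0, (v t * u t + u t * v t)) + u 0 * u 0)) := by
    have := (intervalIntegral_tendsto_integral_Ioi 0
      (h.integrable_mul_add_mul h).integrableOn tendsto_id).add_const (u 0 * u 0)
    simpa only [id, ← h.mul_sub_mul_eq_integral h, sub_add_cancel] using this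
  have hlimit := IntegrableAtFilter.eq_zero_of_tendsto
    ((h.memLp.integrable_mul h.memLp).integrableAtFilter atTop) (fun s hs => by
      obtain ⟨b, hb⟩ := mem_atTop_sets.1 hs
      exact top_le_iff.1 (Real.volume_Ici (a := b) ▸ measure_mono hb)) hsq
  rw [hlimit] at hsq
  rw [tendsto_zero_iff_abs_tendsto_zero]
  simpa [Real.sqrt_mul_self_eq_abs, Function.comp_def] using hsq.sqrt

lemma tendsto_atBot (h : IsH1 u v) : Tendsto u atBot (𝓝 0) := by
  simpa [Function.comp_def] using h.comp_neg.tendsto_atTop.comp tendsto_neg_atBot_atTop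

lemma integral_mul_add_mul_eq_zero (hu : IsH1 u v) (hf : IsH1 f g) :
    ∫ t, (v t * f t + u t * g t) = 0 := by
  have hint := intervalIntegral_tendsto_integral (hu.integrable_mul_add_mul hf)
    tendsto_neg_atTop_atBot tendsto_id
  have hprod := (hu.tendsto_atTop.mul hf.tendsto_atTop).sub
    ((hu.tendsto_atBot.mul hf.tendsto_atBot).comp tendsto_neg_atTop_atBot)
  simp only [← hu.mul_sub_mul_eq_integral hf] at hint
  simpa using tendsto_nhds_unique hint hprod

lemma integral_Ioi_comp_mul (h : IsH1 u v) {G G' : ℝ → ℝ} (hG : ∀ x, HasDerivAt G (G' x) x)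
    (hG' : Continuous G') {a : ℝ} (hint : IntegrableOn (fun t => G' (u t) * v t) (Ioi a)) :
    ∫ t in Ioi a, G' (u t) * v t = G 0 - G (u a) := by
  have hlim := intervalIntegral_tendsto_integral_Ioi a hint tendsto_id
  simp only [id, ← h.comp_sub_comp_eq_integral hG hG'] at hlim
  exact tendsto_nhds_unique hlim
    (((hG 0).continuousAt.tendsto.comp h.tendsto_atTop).sub_const (G (u a)))

lemma exists_forall_le (h : IsH1 u v) {x : ℝ} (hx : 0 < u x) : ∃ y, ∀ t, u t ≤ u y := by
  refine h.continuous.exists_forall_ge' x ?_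
  rw [cocompact_eq_atBot_atTop, eventually_sup]
  exact ⟨h.tendsto_atBot.eventually_le_const hx, h.tendsto_atTop.eventually_le_const hx⟩

lemma isBounded_range (h : IsH1 u v) : Bornology.IsBounded (range u) :=
  h.continuous.isBounded_range_iff_isBigO_atTop_atBot.2
    ⟨h.tendsto_atTop.isBigO_one ℝ, h.tendsto_atBot.isBigO_one ℝ⟩

lemma memLp_mul_comp (h : IsH1 u v) {G : ℝ → ℝ} (hG : Continuous G) :
    MemLp (fun t => u t * G (u t)) 2 := by
  obtain ⟨C, hC⟩ := (h.isBounded_range.isCompact_closure.image hG).isBounded.exists_norm_le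
  refine h.memLp.of_le_mul (c := C)
    (h.continuous.mul (hG.comp h.continuous)).aestronglyMeasurable
    (Eventually.of_forall fun t => ?_)
  rw [norm_mul, mul_comm]
  gcongr
  exact hC _ (mem_image_of_mem G (subset_closure (mem_range_self t)))

end IsH1

namespace H1Pair

variable {φ φ' : ℝ → ℝ}

lemma eq_of_not_integrableAtFilter (h : H1Pair φ φ') {p : ℝ}
    (hp : ¬IntegrableAtFilter φ' (𝓝 p)) {a b : ℝ} (ha : a < p) (hb : p < b) : φ b = φ a := by
  have hab : a ≤ b := (ha.trans hb).le
  refine sub_eq_zero.1 ((h.2.2.2 a b hab).trans (intervalIntegral.integral_undef fun hI => hp ?_))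
  exact ⟨Ioc a b, Ioc_mem_nhds ha hb, (intervalIntegrable_iff_integrableOn_Ioc_of_le hab).1 hI⟩

-- Were `φ'` not integrable near `p`, its integrals across `p` would take the junk value `0`, making
-- `φ` constant.
lemma locallyIntegrable_deriv (h : H1Pair φ φ') (hφ : ∫ x, φ x ^ 2 ≠ 0) :
    LocallyIntegrable φ' := by
  intro p
  by_contra hp
  have hconst : ∀ x ≠ p, φ x = φ (p + 1) := by
    intro x hx
    rcases lt_or_gt_of_ne hx with hx | hx
    · exact (h.eq_of_not_integrableAtFilter hp hx (lt_add_one p)).symm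
    · rw [h.eq_of_not_integrableAtFilter hp (sub_one_lt p) hx,
        h.eq_of_not_integrableAtFilter hp (sub_one_lt p) (lt_add_one p)]
  have hae : (fun x => φ x ^ 2) =ᵐ[volume] fun _ => φ (p + 1) ^ 2 := by
    filter_upwards [Measure.ae_ne volume p] with x hx
    rw [hconst x hx]
  rcases integrable_const_iff.1 (h.2.1.congr hae) with hzero | hfinite
  · exact hφ (by rw [integral_congr_ae hae, hzero, integral_zero])
  · simpa using hfinite.measure_univ_lt_top

lemma isH1 (h : H1Pair φ φ') (hφ : ∫ x, φ x ^ 2 ≠ 0) : IsH1 φ φ' where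
  continuous := h.1
  memLp := (memLp_two_iff_integrable_sq h.1.aestronglyMeasurable).2 h.2.1
  memLp_deriv := (memLp_two_iff_integrable_sq
    (h.locallyIntegrable_deriv hφ).aestronglyMeasurable).2 h.2.2.1
  sub_eq_integral a b := by
    rcases le_total a b with hab | hba
    · exact h.2.2.2 a b hab
    · rw [intervalIntegral.integral_symm, ← h.2.2.2 b a hba, neg_sub]

end H1Pair

/-! ### Energy and defect from the soliton equation -/

/-- The energy `∫ (v² - k² u³)` of a function `u` with weak derivative `v`: up to a constant factor,
`EKdV c d` at `-u` when `c * k ^ 2 = d`. -/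
noncomputable def kdvEnergy (k : ℝ) (u v : ℝ → ℝ) : ℝ := ∫ t, (v t ^ 2 - k ^ 2 * u t ^ 3)

/-- The amount by which `u`, with weak derivative `v` and maximum `u 0`, fails to satisfy on
`(0, ∞)` the first-order equation `u' = -k u √(u 0 - u)` of a soliton. -/
noncomputable def solitonDefect (k : ℝ) (u v : ℝ → ℝ) : ℝ :=
  ∫ t in Ioi 0, (v t + k * (u t * √(u 0 - u t))) ^ 2

lemma solitonDefect_nonneg (k : ℝ) (u v : ℝ → ℝ) : 0 ≤ solitonDefect k u v :=
  integral_nonneg fun _ => sq_nonneg _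

lemma hasDerivAt_mul_sqrt (x : ℝ) : HasDerivAt (fun x => x * √x) (3 / 2 * √x) x := by
  have hrpow : (fun x => x * √x) = fun x : ℝ => x ^ (3 / 2 : ℝ) := by
    funext y
    rcases le_or_gt 0 y with hy | hy
    · rw [show (3 / 2 : ℝ) = 1 + 1 / 2 by norm_num,
        Real.rpow_add_of_nonneg hy zero_le_one one_half_pos.le, Real.rpow_one, Real.sqrt_eq_rpow]
    · rw [Real.sqrt_eq_zero_of_nonpos hy.le, mul_zero, Real.rpow_def_of_neg hy,
        show (3 / 2 : ℝ) * Real.pi = Real.pi / 2 + Real.pi by ring, Real.cos_add_pi,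
        Real.cos_pi_div_two, neg_zero, mul_zero]
  rw [hrpow, Real.sqrt_eq_rpow]
  refine (Real.hasDerivAt_rpow_const (p := 3 / 2) (Or.inr (by norm_num))).congr_deriv ?_
  norm_num

lemma hasDerivAt_primitive_mul_sqrt_sub (M s : ℝ) :
    HasDerivAt (fun s => -(2 / 15) * ((2 * M + 3 * s) * ((M - s) * √(M - s))))
      (s * √(M - s)) s := by
  have hlin : HasDerivAt (fun s : ℝ => 2 * M + 3 * s) 3 s := by
    simpa using ((hasDerivAt_id s).const_mul 3).const_add (2 * M)
  have hroot : HasDerivAt (fun s => (M - s) * √(M - s)) (3 / 2 * √(M - s) * -1) s :=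
    (hasDerivAt_mul_sqrt (M - s)).comp s ((hasDerivAt_id s).const_sub M)
  refine ((hlin.mul hroot).const_mul (-(2 / 15))).congr_deriv ?_
  ring

namespace IsH1

variable {u v : ℝ → ℝ} {k : ℝ}

lemma nonneg_of_forall_le (h : IsH1 u v) {M : ℝ} (hM : ∀ t, u t ≤ M) : 0 ≤ M :=
  le_of_tendsto h.tendsto_atTop (Eventually.of_forall hM)

lemma integrable_cube (h : IsH1 u v) : Integrable (fun t => u t ^ 3) :=
  (h.memLp.integrable_mul (h.memLp_mul_comp continuous_id)).congr
    (Eventually.of_forall fun t => by simp only [Pi.mul_apply, id]; ring)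

lemma integrable_kdvEnergy (h : IsH1 u v) (k : ℝ) :
    Integrable (fun t => v t ^ 2 - k ^ 2 * u t ^ 3) :=
  h.memLp_deriv.integrable_sq.sub (h.integrable_cube.const_mul _)

lemma memLp_mul_sqrt_sub (h : IsH1 u v) (M : ℝ) : MemLp (fun t => u t * √(M - u t)) 2 :=
  h.memLp_mul_comp (G := fun s => √(M - s)) (by fun_prop)

lemma integral_Ioi_mul_sqrt_sub_mul (h : IsH1 u v) (h0 : 0 ≤ u 0) :
    ∫ t in Ioi 0, u t * √(u 0 - u t) * v t = -(4 / 15) * √(u 0) ^ 5 := by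
  have hint : Integrable (fun t => u t * √(u 0 - u t) * v t) :=
    (h.memLp_mul_sqrt_sub (u 0)).integrable_mul h.memLp_deriv
  rw [h.integral_Ioi_comp_mul (hasDerivAt_primitive_mul_sqrt_sub (u 0)) (by fun_prop)
    hint.integrableOn, sub_zero, sub_self]
  linear_combination 4 / 15 * √(u 0) * (u 0 + √(u 0) ^ 2) * Real.sq_sqrt h0

lemma solitonDefect_eq (h : IsH1 u v) (hpeak : ∀ t, u t ≤ u 0) :
    solitonDefect k u v =
      (∫ t in Ioi 0, (v t ^ 2 - k ^ 2 * u t ^ 3 + k ^ 2 * u 0 * u t ^ 2)) -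
        8 / 15 * k * √(u 0) ^ 5 := by
  have hsq : ∀ t, (v t + k * (u t * √(u 0 - u t))) ^ 2 =
      (v t ^ 2 - k ^ 2 * u t ^ 3 + k ^ 2 * u 0 * u t ^ 2) +
        2 * k * (u t * √(u 0 - u t) * v t) := fun t => by
    linear_combination k ^ 2 * u t ^ 2 * Real.sq_sqrt (sub_nonneg.2 (hpeak t))
  have hcross : Integrable (fun t => u t * √(u 0 - u t) * v t) :=
    (h.memLp_mul_sqrt_sub (u 0)).integrable_mul h.memLp_deriv
  have hE : Integrable (fun t => v t ^ 2 - k ^ 2 * u t ^ 3 + k ^ 2 * u 0 * u t ^ 2) :=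
    (h.integrable_kdvEnergy k).add (h.memLp.integrable_sq.const_mul _)
  simp only [solitonDefect, hsq]
  rw [integral_add hE.integrableOn (hcross.const_mul _).integrableOn, integral_const_mul,
    h.integral_Ioi_mul_sqrt_sub_mul (h.nonneg_of_forall_le hpeak)]
  ring

lemma solitonDefect_add_comp_neg (h : IsH1 u v) (hpeak : ∀ t, u t ≤ u 0) :
    solitonDefect k u v + solitonDefect k (fun t => u (-t)) (fun t => -v (-t)) =
      kdvEnergy k u v + k ^ 2 * u 0 * (∫ t, u t ^ 2) - 16 / 15 * k * √(u 0) ^ 5 := by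
  have hE := h.integrable_kdvEnergy k
  have hM := h.memLp.integrable_sq.const_mul (k ^ 2 * u 0)
  have hsplit := integral_add_compl (measurableSet_Iic (a := (0 : ℝ))) (hE.add hM)
  have hreflect := integral_comp_neg_Ioi 0
    fun t => v t ^ 2 - k ^ 2 * u t ^ 3 + k ^ 2 * u 0 * u t ^ 2
  rw [h.solitonDefect_eq hpeak, h.comp_neg.solitonDefect_eq fun t => by simpa using hpeak (-t)]
  simp only [Pi.add_apply, compl_Iic, neg_zero, neg_sq] at hsplit hreflect ⊢
  rw [hreflect, kdvEnergy, ← integral_const_mul, ← integral_add hE hM, ← hsplit]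
  ring

-- `16/15 p⁵ - 8/3 a³ p² + 8/5 a⁵` has a double zero at `p = a`.
lemma solitonDefect_add_comp_neg_of_mass {a : ℝ} (h : IsH1 u v) (hk : k ≠ 0)
    (hpeak : ∀ t, u t ≤ u 0) (hmass : ∫ t, u t ^ 2 = 8 / 3 * a ^ 3 / k) :
    solitonDefect k u v + solitonDefect k (fun t => u (-t)) (fun t => -v (-t)) +
        8 / 15 * k * (√(u 0) - a) ^ 2 *
          (2 * √(u 0) ^ 3 + 4 * a * √(u 0) ^ 2 + 6 * a ^ 2 * √(u 0) + 3 * a ^ 3) =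
      kdvEnergy k u v + 8 / 5 * k * a ^ 5 := by
  have hk2 : k ^ 2 * u 0 * (8 / 3 * a ^ 3 / k) = 8 / 3 * k * a ^ 3 * √(u 0) ^ 2 := by
    rw [Real.sq_sqrt (h.nonneg_of_forall_le hpeak)]
    field_simp
  rw [h.solitonDefect_add_comp_neg hpeak, hmass, hk2]
  ring

end IsH1

/-! ### Solitons -/

lemma sech_neg (x : ℝ) : sech (-x) = sech x := by rw [sech, sech, Real.cosh_neg]

lemma sech_pos (x : ℝ) : 0 < sech x := one_div_pos.2 (Real.cosh_pos x)

lemma continuous_sech : Continuous sech :=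
  continuous_const.div Real.continuous_cosh fun x => (Real.cosh_pos x).ne'

lemma sech_sq_eq_one_sub_tanh_sq (x : ℝ) : sech x ^ 2 = 1 - Real.tanh x ^ 2 := by
  have hcosh := (Real.cosh_pos x).ne'
  rw [sech, Real.tanh_eq_sinh_div_cosh]
  field_simp
  linarith [Real.cosh_sq x]

lemma sech_sq_le_one (x : ℝ) : sech x ^ 2 ≤ 1 := by
  linarith [sech_sq_eq_one_sub_tanh_sq x, sq_nonneg (Real.tanh x)]

lemma sech_arsinh_sq (x : ℝ) : sech (Real.arsinh x) ^ 2 = (1 + x ^ 2)⁻¹ := by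
  rw [sech, Real.cosh_arsinh, div_pow, one_pow, Real.sq_sqrt (by positivity), one_div]

lemma hasDerivAt_tanh (x : ℝ) : HasDerivAt Real.tanh (sech x ^ 2) x := by
  have hcosh := (Real.cosh_pos x).ne'
  rw [show Real.tanh = fun x => Real.sinh x / Real.cosh x from funext Real.tanh_eq_sinh_div_cosh]
  refine ((Real.hasDerivAt_sinh x).fun_div (Real.hasDerivAt_cosh x) hcosh).congr_deriv ?_
  rw [sech, div_pow, one_pow]
  congr 1
  linarith [Real.cosh_sq x]

lemma hasDerivAt_sech_sq (x : ℝ) :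
    HasDerivAt (fun x => sech x ^ 2) (-2 * (sech x ^ 2 * Real.tanh x)) x := by
  rw [funext sech_sq_eq_one_sub_tanh_sq]
  refine (((hasDerivAt_tanh x).fun_pow 2).const_sub 1).congr_deriv ?_
  norm_num
  ring

lemma tendsto_tanh_atTop : Tendsto Real.tanh atTop (𝓝 1) := by
  have hlower : ∀ x, 1 - Real.exp (-x) ≤ Real.tanh x := fun x => by
    rw [Real.tanh_eq_sinh_div_cosh, le_div_iff₀ (Real.cosh_pos x)]
    nlinarith [Real.cosh_sub_sinh x, Real.one_le_cosh x, Real.exp_pos (-x)]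
  refine tendsto_of_tendsto_of_tendsto_of_le_of_le ?_ tendsto_const_nhds hlower
    fun x => (Real.tanh_lt_one x).le
  simpa using Real.tendsto_exp_neg_atTop_nhds_zero.const_sub 1

lemma tendsto_tanh_atBot : Tendsto Real.tanh atBot (𝓝 (-1)) := by
  simpa [Function.comp_def] using (tendsto_tanh_atTop.comp tendsto_neg_atBot_atTop).neg

lemma integrable_sech_pow_four : Integrable (fun x => sech x ^ 4) := by
  refine integrable_inv_one_add_sq.mono' (continuous_sech.pow 4).aestronglyMeasurable
    (Eventually.of_forall fun x => ?_)
  have hsinh : x ^ 2 ≤ Real.sinh x ^ 2 := by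
    rw [sq_le_sq, Real.abs_sinh]
    exact Real.self_le_sinh_iff.2 (abs_nonneg x)
  calc ‖sech x ^ 4‖ = sech x ^ 2 * sech x ^ 2 := by
        rw [Real.norm_of_nonneg (by positivity)]; ring
    _ ≤ sech x ^ 2 := mul_le_of_le_one_left (sq_nonneg _) (sech_sq_le_one x)
    _ = (Real.cosh x ^ 2)⁻¹ := by rw [sech, div_pow, one_pow, one_div]
    _ ≤ (1 + x ^ 2)⁻¹ := by
        gcongr
        linarith [Real.cosh_sq x]

lemma integral_sech_pow_four : ∫ x, sech x ^ 4 = 4 / 3 := by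
  have hprimitive (x : ℝ) :
      HasDerivAt (fun x => Real.tanh x - Real.tanh x ^ 3 / 3) (sech x ^ 4) x := by
    refine ((hasDerivAt_tanh x).fun_sub
      (((hasDerivAt_tanh x).fun_pow 3).div_const 3)).congr_deriv ?_
    norm_num
    linear_combination sech x ^ 2 * -sech_sq_eq_one_sub_tanh_sq x
  rw [integral_of_hasDerivAt_of_tendsto hprimitive integrable_sech_pow_four
    (tendsto_tanh_atBot.sub ((tendsto_tanh_atBot.pow 3).div_const 3))
    (tendsto_tanh_atTop.sub ((tendsto_tanh_atTop.pow 3).div_const 3))]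
  norm_num

/-- The even soliton of height `a ^ 2`, solving `S'' = k² a² S - (3 / 2) k² S²`. -/
noncomputable def soliton (k a t : ℝ) : ℝ := a ^ 2 * sech (k * a / 2 * t) ^ 2

/-- The derivative of `soliton k a`. -/
noncomputable def solitonDeriv (k a t : ℝ) : ℝ :=
  -(k * a) * soliton k a t * Real.tanh (k * a / 2 * t)

section Soliton

variable {k a : ℝ}

lemma soliton_zero (k a : ℝ) : soliton k a 0 = a ^ 2 := by simp [soliton, sech]

lemma soliton_neg (k a t : ℝ) : soliton k a (-t) = soliton k a t := by
  rw [soliton, soliton, mul_neg, sech_neg]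

lemma solitonDeriv_neg (k a t : ℝ) : solitonDeriv k a (-t) = -solitonDeriv k a t := by
  rw [solitonDeriv, solitonDeriv, soliton_neg, mul_neg, Real.tanh_neg, mul_neg]

lemma soliton_pos (ha : a ≠ 0) (k t : ℝ) : 0 < soliton k a t :=
  mul_pos (by positivity) (pow_pos (sech_pos _) 2)

lemma soliton_le_sq (k a t : ℝ) : soliton k a t ≤ a ^ 2 :=
  mul_le_of_le_one_right (sq_nonneg a) (sech_sq_le_one _)

lemma sq_sub_soliton (k a t : ℝ) :
    a ^ 2 - soliton k a t = (a * Real.tanh (k * a / 2 * t)) ^ 2 := by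
  rw [soliton, sech_sq_eq_one_sub_tanh_sq]
  ring

lemma hasDerivAt_soliton (k a t : ℝ) :
    HasDerivAt (soliton k a) (solitonDeriv k a t) t := by
  have hlin : HasDerivAt (fun t => k * a / 2 * t) (k * a / 2) t := by
    simpa using (hasDerivAt_id t).const_mul (k * a / 2)
  refine (((hasDerivAt_sech_sq (k * a / 2 * t)).comp t hlin).const_mul (a ^ 2)).congr_deriv ?_
  rw [solitonDeriv, soliton]
  ring

lemma hasDerivAt_solitonDeriv (k a t : ℝ) :
    HasDerivAt (solitonDeriv k a)
      (k ^ 2 * a ^ 2 * soliton k a t - 3 / 2 * k ^ 2 * soliton k a t ^ 2) t := by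
  have hlin : HasDerivAt (fun t => k * a / 2 * t) (k * a / 2) t := by
    simpa using (hasDerivAt_id t).const_mul (k * a / 2)
  refine (((hasDerivAt_soliton k a t).const_mul (-(k * a))).mul
    ((hasDerivAt_tanh (k * a / 2 * t)).comp t hlin)).congr_deriv ?_
  have htanh := sq_sub_soliton k a t
  have hsech : soliton k a t = a ^ 2 * sech (k * a / 2 * t) ^ 2 := rfl
  simp only [Function.comp_apply, solitonDeriv]
  linear_combination k ^ 2 / 2 * soliton k a t * hsech - k ^ 2 * soliton k a t * htanh

lemma continuous_soliton (k a : ℝ) : Continuous (soliton k a) :=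
  continuous_iff_continuousAt.2 fun t => (hasDerivAt_soliton k a t).continuousAt

lemma continuous_solitonDeriv (k a : ℝ) : Continuous (solitonDeriv k a) :=
  continuous_iff_continuousAt.2 fun t => (hasDerivAt_solitonDeriv k a t).continuousAt

lemma solitonDeriv_eq_of_nonneg (hk : 0 ≤ k) (ha : 0 ≤ a) {t : ℝ} (ht : 0 ≤ t) :
    solitonDeriv k a t = -(k * (soliton k a t * √(a ^ 2 - soliton k a t))) := by
  have htanh : 0 ≤ Real.tanh (k * a / 2 * t) := by
    rw [Real.tanh_eq_sinh_div_cosh]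
    exact div_nonneg (Real.sinh_nonneg_iff.2 (by positivity)) (Real.cosh_pos _).le
  rw [sq_sub_soliton, Real.sqrt_sq (mul_nonneg ha htanh), solitonDeriv]
  ring

lemma memLp_soliton (hk : k ≠ 0) (ha : a ≠ 0) : MemLp (soliton k a) 2 := by
  rw [memLp_two_iff_integrable_sq (continuous_soliton k a).aestronglyMeasurable]
  have hscale : k * a / 2 ≠ 0 := by positivity
  refine ((integrable_sech_pow_four.comp_mul_left' hscale).const_mul (a ^ 4)).congr
    (Eventually.of_forall fun t => ?_)
  simp only [soliton]
  ring

lemma integral_soliton_sq (hk : 0 < k) (ha : 0 < a) :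
    ∫ t, soliton k a t ^ 2 = 8 / 3 * a ^ 3 / k := by
  have hsq : ∀ t, soliton k a t ^ 2 = a ^ 4 * sech (k * a / 2 * t) ^ 4 := fun t => by
    rw [soliton]; ring
  simp only [hsq]
  rw [integral_const_mul, Measure.integral_comp_mul_left (fun x => sech x ^ 4),
    integral_sech_pow_four, smul_eq_mul, abs_of_pos (by positivity)]
  field_simp
  norm_num

lemma isH1_soliton (hk : k ≠ 0) (ha : a ≠ 0) : IsH1 (soliton k a) (solitonDeriv k a) := by
  refine .of_hasDerivAt (hasDerivAt_soliton k a) (continuous_solitonDeriv k a)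
    (memLp_soliton hk ha) ((memLp_soliton hk ha).of_le_mul (c := |k * a|)
      (continuous_solitonDeriv k a).aestronglyMeasurable (Eventually.of_forall fun t => ?_))
  rw [solitonDeriv, norm_mul, norm_mul, norm_neg, Real.norm_eq_abs (k * a)]
  exact mul_le_of_le_one_right (by positivity) (Real.abs_tanh_lt_one _).le

lemma isH1_solitonDeriv (hk : k ≠ 0) (ha : a ≠ 0) :
    IsH1 (solitonDeriv k a)
      (fun t => k ^ 2 * a ^ 2 * soliton k a t - 3 / 2 * k ^ 2 * soliton k a t ^ 2) := by
  have hS := isH1_soliton hk ha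
  refine .of_hasDerivAt (hasDerivAt_solitonDeriv k a) ?_ hS.memLp_deriv ?_
  · have := continuous_soliton k a
    fun_prop
  · convert hS.memLp_mul_comp (G := fun s => k ^ 2 * a ^ 2 - 3 / 2 * k ^ 2 * s) (by fun_prop)
      using 2 with t
    ring

lemma solitonDefect_soliton (hk : 0 ≤ k) (ha : 0 ≤ a) :
    solitonDefect k (soliton k a) (solitonDeriv k a) = 0 := by
  rw [solitonDefect, soliton_zero]
  refine (setIntegral_congr_fun measurableSet_Ioi fun t ht => ?_).trans (integral_zero _ _)
  simp only [solitonDeriv_eq_of_nonneg hk ha (mem_Ioi.1 ht).le]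
  ring

lemma kdvEnergy_soliton (hk : 0 < k) (ha : 0 < a) :
    kdvEnergy k (soliton k a) (solitonDeriv k a) = -(8 / 5) * k * a ^ 5 := by
  have hpeak : ∀ t, soliton k a t ≤ soliton k a 0 := fun t => by
    rw [soliton_zero]
    exact soliton_le_sq k a t
  have hzero := solitonDefect_soliton hk.le ha.le
  have := (isH1_soliton hk.ne' ha.ne').solitonDefect_add_comp_neg_of_mass hk.ne' hpeak
    (integral_soliton_sq hk ha)
  simp only [soliton_neg, solitonDeriv_neg, neg_neg, soliton_zero, Real.sqrt_sq ha.le, sub_self,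
    hzero] at this
  linarith

end Soliton

/-! ### Comparison with the soliton -/

namespace IsH1

variable {u v : ℝ → ℝ} {k : ℝ}

lemma abs_sub_add_integral_le (h : IsH1 u v) (k : ℝ) {x : ℝ} (hx : 0 ≤ x) :
    |u x - u 0 + k * ∫ t in 0..x, u t * √(u 0 - u t)| ≤ √x * √(solitonDefect k u v) := by
  have hF := h.memLp_mul_sqrt_sub (u 0)
  have he : MemLp (fun t => v t + k * (u t * √(u 0 - u t))) 2 :=
    h.memLp_deriv.add (hF.const_mul k)
  have hFc : Continuous fun t => u t * √(u 0 - u t) := by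
    have := h.continuous
    fun_prop
  rw [h.sub_eq_integral 0 x, ← intervalIntegral.integral_const_mul,
    ← intervalIntegral.integral_add (h.intervalIntegrable_deriv 0 x)
      ((hFc.const_mul k).intervalIntegrable 0 x), intervalIntegral.integral_of_le hx]
  refine (abs_integral_le_sqrt_measureReal_mul_sqrt_integral_sq (he.restrict _)).trans ?_
  have hvolume : (volume.restrict (Ioc 0 x)).real univ = x := by
    simp [hx]
  rw [hvolume]
  gcongr
  exact setIntegral_mono_set he.integrable_sq.integrableOn
    (Eventually.of_forall fun _ => sq_nonneg _) Ioc_subset_Ioi_self.eventuallyLE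

-- At a point where the soliton meets `u 0 + ε - ∫ k u √(u 0 - u)`, it lies above `u` and is further
-- from its own peak than `u` is, hence decreases faster.
lemma soliton_add_sub_le (h : IsH1 u v) (hk : 0 < k) (hpeak : ∀ t, u t ≤ u 0) {A ε X τ : ℝ}
    (hA : 0 < A) (hAε : A ^ 2 = u 0 + 2 * ε) (hτ : 0 ≤ τ) (hstart : soliton k A τ ≤ u 0 + ε)
    (hX : 0 ≤ X) (hdefect : √X * √(solitonDefect k u v) < ε) :
    soliton k A (X + τ) - 2 * ε ≤ u X := by
  set w : ℝ → ℝ := fun x => u 0 + ε - k * ∫ t in 0..x, u t * √(u 0 - u t) with hw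
  have hF : Continuous fun t => u t * √(u 0 - u t) := by
    have := h.continuous
    fun_prop
  have hw_deriv : ∀ x, HasDerivAt w (-(k * (u x * √(u 0 - u x)))) x := fun x =>
    ((hF.integral_hasStrictDerivAt 0 x).hasDerivAt.const_mul k).const_sub (u 0 + ε)
  have hu_near : ∀ x ∈ Icc 0 X, |u x - (w x - ε)| < ε := by
    intro x hx
    calc |u x - (w x - ε)| = |u x - u 0 + k * ∫ t in 0..x, u t * √(u 0 - u t)| := by
          rw [hw]; ring_nf
      _ ≤ √x * √(solitonDefect k u v) := h.abs_sub_add_integral_le k hx.1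
      _ ≤ √X * √(solitonDefect k u v) := by gcongr; exact hx.2
      _ < ε := hdefect
  have hs_deriv : ∀ x, HasDerivAt (fun x => soliton k A (x + τ)) (solitonDeriv k A (x + τ)) x :=
    fun x => (hasDerivAt_soliton k A (x + τ)).comp_add_const x τ
  have hcross : ∀ x ∈ Ico 0 X, soliton k A (x + τ) = w x →
      solitonDeriv k A (x + τ) < -(k * (u x * √(u 0 - u x))) := by
    intro x hx hxw
    obtain ⟨hlo, hhi⟩ := abs_lt.1 (hu_near x (Ico_subset_Icc_self hx))
    rw [solitonDeriv_eq_of_nonneg hk.le hA.le (add_nonneg hx.1 hτ), neg_lt_neg_iff]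
    gcongr k * ?_
    calc u x * √(u 0 - u x) ≤ soliton k A (x + τ) * √(u 0 - u x) := by
          gcongr
          linarith
      _ < soliton k A (x + τ) * √(A ^ 2 - soliton k A (x + τ)) := by
          refine mul_lt_mul_of_pos_left (Real.sqrt_lt_sqrt ?_ ?_) (soliton_pos hA.ne' k _)
          · linarith [hpeak x]
          · linarith
  have hle : soliton k A (X + τ) ≤ w X :=
    image_le_of_deriv_right_lt_deriv_boundary
      (fun x _ => (hs_deriv x).continuousAt.continuousWithinAt)
      (fun x _ => (hs_deriv x).hasDerivWithinAt) (by simpa [hw] using hstart) hw_deriv hcross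
      (right_mem_Icc.2 hX)
  linarith [(abs_lt.1 (hu_near X (right_mem_Icc.2 hX))).1]

lemma sech_sq_sub_le (h : IsH1 u v) (hk : 0 < k) (hpeak : ∀ t, u t ≤ u 0) {ε X : ℝ} (hX : 0 ≤ X)
    (hdefect : √X * √(solitonDefect k u v) < ε) :
    (u 0 + 2 * ε) * sech (k * √(u 0 + 2 * ε) / 2 * X + Real.arsinh √(ε / (u 0 + ε))) ^ 2 - 2 * ε ≤
      u X := by
  have hε : 0 < ε := lt_of_le_of_lt (by positivity) hdefect
  have h0 : 0 ≤ u 0 := h.nonneg_of_forall_le hpeak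
  set A := √(u 0 + 2 * ε)
  set τ := 2 / (k * A) * Real.arsinh √(ε / (u 0 + ε)) with hτ
  have hA : 0 < A := Real.sqrt_pos.2 (by positivity)
  have hA2 : A ^ 2 = u 0 + 2 * ε := Real.sq_sqrt (by positivity)
  have hphase : k * A / 2 * τ = Real.arsinh √(ε / (u 0 + ε)) := by
    rw [hτ]
    field_simp
  have hstart : soliton k A τ = u 0 + ε := by
    rw [soliton, hphase, hA2, sech_arsinh_sq, Real.sq_sqrt (by positivity)]
    field_simp
    ring
  have hτ0 : 0 ≤ τ := mul_nonneg (by positivity) (Real.arsinh_nonneg_iff.2 (Real.sqrt_nonneg _))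
  have := h.soliton_add_sub_le hk hpeak hA hA2 hτ0 hstart.le hX hdefect
  rwa [soliton, mul_add, hphase, hA2] at this

end IsH1

section Sequence

variable {k a : ℝ} {u v : ℕ → ℝ → ℝ}

lemma tendsto_max_soliton_sub_of_nonneg (hk : 0 < k) (ha : 0 < a) (h : ∀ m, IsH1 (u m) (v m))
    (hpeak : ∀ᶠ m in atTop, ∀ t, u m t ≤ u m 0) (htop : Tendsto (fun m => u m 0) atTop (𝓝 (a ^ 2)))
    (hdefect : Tendsto (fun m => solitonDefect k (u m) (v m)) atTop (𝓝 0)) {X : ℝ} (hX : 0 ≤ X) :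
    Tendsto (fun m => max (soliton k a X - u m X) 0) atTop (𝓝 0) := by
  set ε : ℕ → ℝ := fun m => √X * √(solitonDefect k (u m) (v m)) + 1 / (m + 1)
  have hε : Tendsto ε atTop (𝓝 0) := by
    simpa [ε] using (hdefect.sqrt.const_mul √X).add tendsto_one_div_add_atTop_nhds_zero_nat
  set lower : ℝ → ℝ → ℝ := fun M ε =>
    (M + 2 * ε) * sech (k * √(M + 2 * ε) / 2 * X + Real.arsinh √(ε / (M + ε))) ^ 2 - 2 * ε
  have hlower : Tendsto (fun m => lower (u m 0) (ε m)) atTop (𝓝 (soliton k a X)) := by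
    have hM := htop.add (hε.const_mul 2)
    have hratio := hε.div (htop.add hε) (by simp [ha.ne'])
    have hphase := ((hM.sqrt.const_mul k).div_const 2 |>.mul_const X).add hratio.sqrt.arsinh
    have := (hM.mul (((continuous_sech.tendsto _).comp hphase).pow 2)).sub (hε.const_mul 2)
    simpa [Real.sqrt_sq ha.le, soliton] using this
  have hmax : Tendsto (fun m => max (soliton k a X - lower (u m 0) (ε m)) 0) atTop (𝓝 0) := by
    simpa using (hlower.const_sub (soliton k a X)).max (tendsto_const_nhds (x := (0 : ℝ)))
  refine squeeze_zero' (Eventually.of_forall fun m => le_max_right _ _) ?_ hmax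
  filter_upwards [hpeak] with m hm
  gcongr
  exact (h m).sech_sq_sub_le hk hm hX (lt_add_of_pos_right _ Nat.one_div_pos_of_nat)

end Sequence

namespace IsH1

variable {u v : ℝ → ℝ} {k a : ℝ}

-- Second-order expansion of the energy at the soliton, which is a critical point among functions of
-- its mass with multiplier `k² a²`.
lemma integral_sub_solitonDeriv_sq_le (h : IsH1 u v) (hk : 0 < k) (ha : 0 < a)
    (hpeak : ∀ t, u t ≤ u 0) (hmass : ∫ t, u t ^ 2 = 8 / 3 * a ^ 3 / k) :
    ∫ t, (v t - solitonDeriv k a t) ^ 2 ≤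
      kdvEnergy k u v + 8 / 5 * k * a ^ 5 +
        k ^ 2 * (a ^ 2 + u 0) * ∫ t, (u t - soliton k a t) ^ 2 := by
  set S := soliton k a
  set S' := solitonDeriv k a
  set S'' : ℝ → ℝ := fun t => k ^ 2 * a ^ 2 * S t - 3 / 2 * k ^ 2 * S t ^ 2
  have hS : IsH1 S S' := isH1_soliton hk.ne' ha.ne'
  have hS' : IsH1 S' S'' := isH1_solitonDeriv hk.ne' ha.ne'
  have hw := h.sub hS
  have hE : Integrable fun t => v t ^ 2 - k ^ 2 * u t ^ 3 - (S' t ^ 2 - k ^ 2 * S t ^ 3) :=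
    (h.integrable_kdvEnergy k).sub (hS.integrable_kdvEnergy k)
  have hQ := hw.memLp.integrable_sq.const_mul (k ^ 2 * (a ^ 2 + u 0))
  have hB := (hw.integrable_mul_add_mul hS').const_mul 2
  have hM : Integrable fun t => k ^ 2 * a ^ 2 * (u t ^ 2 - S t ^ 2) :=
    (h.memLp.integrable_sq.sub hS.memLp.integrable_sq).const_mul (k ^ 2 * a ^ 2)
  have hexpand : ∀ t, (v t - S' t) ^ 2 ≤
      v t ^ 2 - k ^ 2 * u t ^ 3 - (S' t ^ 2 - k ^ 2 * S t ^ 3) +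
        k ^ 2 * (a ^ 2 + u 0) * (u t - S t) ^ 2 -
        2 * ((v t - S' t) * S' t + (u t - S t) * S'' t) + k ^ 2 * a ^ 2 * (u t ^ 2 - S t ^ 2) := by
    intro t
    have hcubic : k ^ 2 * (2 * S t + u t - a ^ 2) * (u t - S t) ^ 2 ≤
        k ^ 2 * (a ^ 2 + u 0) * (u t - S t) ^ 2 := by
      gcongr k ^ 2 * ?_ * _
      linarith [soliton_le_sq k a t, hpeak t]
    linear_combination hcubic
  have hle := integral_mono hw.memLp_deriv.integrable_sq (((hE.add hQ).sub hB).add hM) hexpand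
  rw [integral_add' ((hE.add hQ).sub hB) hM, integral_sub' (hE.add hQ) hB, integral_add' hE hQ,
    integral_sub (h.integrable_kdvEnergy k) (hS.integrable_kdvEnergy k), integral_const_mul,
    integral_const_mul, integral_const_mul, hw.integral_mul_add_mul_eq_zero hS',
    integral_sub h.memLp.integrable_sq hS.memLp.integrable_sq, hmass, integral_soliton_sq hk ha,
    ← kdvEnergy, ← kdvEnergy, kdvEnergy_soliton hk ha] at hle
  linarith

end IsH1

namespace IsH1

variable {u v : ℝ → ℝ} {k a : ℝ}

lemma solitonDefect_add_comp_neg_add_sq_le (h : IsH1 u v) (hk : 0 < k) (ha : 0 < a)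
    (hpeak : ∀ t, u t ≤ u 0) (hmass : ∫ t, u t ^ 2 = 8 / 3 * a ^ 3 / k) :
    solitonDefect k u v + solitonDefect k (fun t => u (-t)) (fun t => -v (-t)) +
        8 / 5 * k * a ^ 3 * (√(u 0) - a) ^ 2 ≤ kdvEnergy k u v + 8 / 5 * k * a ^ 5 := by
  rw [← h.solitonDefect_add_comp_neg_of_mass hk.ne' hpeak hmass]
  have : 0 ≤ 8 / 15 * k * (√(u 0) - a) ^ 2 *
      (2 * √(u 0) ^ 3 + 4 * a * √(u 0) ^ 2 + 6 * a ^ 2 * √(u 0)) := by positivity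
  linarith

end IsH1

lemma kdvEnergy_comp_add_right (k : ℝ) (u v : ℝ → ℝ) (x : ℝ) :
    kdvEnergy k (fun t => u (t + x)) (fun t => v (t + x)) = kdvEnergy k u v :=
  integral_add_right_eq_self (fun t => v t ^ 2 - k ^ 2 * u t ^ 3) x

lemma exists_pos_of_kdvEnergy_neg {k : ℝ} {u v : ℝ → ℝ} (h : kdvEnergy k u v < 0) :
    ∃ x, 0 < u x := by
  by_contra! hu
  refine h.not_ge (integral_nonneg fun t => ?_)
  have : k ^ 2 * u t ^ 3 ≤ 0 :=
    mul_nonpos_of_nonneg_of_nonpos (sq_nonneg k) (Odd.pow_nonpos (by decide) (hu t))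
  exact sub_nonneg.2 (this.trans (sq_nonneg (v t)))

/-! ### Minimising sequences -/

section PeakedMinimisingSequence

variable {k a : ℝ} {u v : ℕ → ℝ → ℝ}

lemma tendsto_peak_and_solitonDefect (hk : 0 < k) (ha : 0 < a) (h : ∀ m, IsH1 (u m) (v m))
    (hmass : ∀ m, ∫ t, u m t ^ 2 = 8 / 3 * a ^ 3 / k)
    (hpeak : ∀ᶠ m in atTop, ∀ t, u m t ≤ u m 0)
    (hE : Tendsto (fun m => kdvEnergy k (u m) (v m)) atTop (𝓝 (-(8 / 5) * k * a ^ 5))) :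
    Tendsto (fun m => u m 0) atTop (𝓝 (a ^ 2)) ∧
      Tendsto (fun m => solitonDefect k (u m) (v m)) atTop (𝓝 0) ∧
      Tendsto (fun m => solitonDefect k (fun t => u m (-t)) (fun t => -v m (-t))) atTop (𝓝 0) := by
  have hexcess : Tendsto (fun m => kdvEnergy k (u m) (v m) + 8 / 5 * k * a ^ 5) atTop (𝓝 0) := by
    have := hE.add_const (8 / 5 * k * a ^ 5)
    rwa [neg_mul, neg_mul, neg_add_cancel] at this
  have hle : ∀ᶠ m in atTop, _ := hpeak.mono fun m hm =>
    (h m).solitonDefect_add_comp_neg_add_sq_le hk ha hm (hmass m)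
  have hcoef : 0 < 8 / 5 * k * a ^ 3 := by positivity
  refine ⟨?_, squeeze_zero' (Eventually.of_forall fun m => solitonDefect_nonneg _ _ _) ?_ hexcess,
    squeeze_zero' (Eventually.of_forall fun m => solitonDefect_nonneg _ _ _) ?_ hexcess⟩
  · have hsqrt_sq : Tendsto (fun m => (√(u m 0) - a) ^ 2) atTop (𝓝 0) := by
      refine squeeze_zero' (Eventually.of_forall fun m => sq_nonneg _) ?_
        (by simpa using hexcess.div_const (8 / 5 * k * a ^ 3))
      filter_upwards [hle] with m hm
      rw [le_div_iff₀' hcoef]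
      linarith [solitonDefect_nonneg k (u m) (v m),
        solitonDefect_nonneg k (fun t => u m (-t)) (fun t => -v m (-t))]
    have hsqrt : Tendsto (fun m => √(u m 0)) atTop (𝓝 a) := by
      rw [tendsto_iff_dist_tendsto_zero]
      simpa [Real.dist_eq, Real.sqrt_sq_eq_abs] using hsqrt_sq.sqrt
    refine (hsqrt.pow 2).congr' ?_
    filter_upwards [hpeak] with m hm
    exact Real.sq_sqrt ((h m).nonneg_of_forall_le hm)
  all_goals
    filter_upwards [hle] with m hm
    linarith [solitonDefect_nonneg k (u m) (v m), mul_nonneg hcoef.le (sq_nonneg (√(u m 0) - a)),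
      solitonDefect_nonneg k (fun t => u m (-t)) (fun t => -v m (-t))]

lemma tendsto_max_soliton_sub (hk : 0 < k) (ha : 0 < a) (h : ∀ m, IsH1 (u m) (v m))
    (hmass : ∀ m, ∫ t, u m t ^ 2 = 8 / 3 * a ^ 3 / k)
    (hpeak : ∀ᶠ m in atTop, ∀ t, u m t ≤ u m 0)
    (hE : Tendsto (fun m => kdvEnergy k (u m) (v m)) atTop (𝓝 (-(8 / 5) * k * a ^ 5))) (X : ℝ) :
    Tendsto (fun m => max (soliton k a X - u m X) 0) atTop (𝓝 0) := by
  obtain ⟨htop, hright, hleft⟩ := tendsto_peak_and_solitonDefect hk ha h hmass hpeak hE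
  rcases le_total 0 X with hX | hX
  · exact tendsto_max_soliton_sub_of_nonneg hk ha h hpeak htop hright hX
  · have hreflect := tendsto_max_soliton_sub_of_nonneg hk ha (fun m => (h m).comp_neg)
      (hpeak.mono fun m hm t => by simpa using hm (-t)) (by simpa using htop) hleft
      (neg_nonneg.2 hX)
    simpa only [neg_neg, soliton_neg] using hreflect

lemma tendsto_integral_sub_soliton_sq (hk : 0 < k) (ha : 0 < a) (h : ∀ m, IsH1 (u m) (v m))
    (hmass : ∀ m, ∫ t, u m t ^ 2 = 8 / 3 * a ^ 3 / k)
    (hpeak : ∀ᶠ m in atTop, ∀ t, u m t ≤ u m 0)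
    (hE : Tendsto (fun m => kdvEnergy k (u m) (v m)) atTop (𝓝 (-(8 / 5) * k * a ^ 5))) :
    Tendsto (fun m => ∫ t, (u m t - soliton k a t) ^ 2) atTop (𝓝 0) :=
  tendsto_integral_sub_sq_of_ae_tendsto_max_sub (memLp_soliton hk.ne' ha.ne')
    (fun t => (soliton_pos ha.ne' k t).le) (fun m => (h m).memLp)
    (fun m => ((hmass m).trans (integral_soliton_sq hk ha).symm).le)
    (Eventually.of_forall (tendsto_max_soliton_sub hk ha h hmass hpeak hE))

lemma tendsto_integral_sub_solitonDeriv_sq (hk : 0 < k) (ha : 0 < a) (h : ∀ m, IsH1 (u m) (v m))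
    (hmass : ∀ m, ∫ t, u m t ^ 2 = 8 / 3 * a ^ 3 / k)
    (hpeak : ∀ᶠ m in atTop, ∀ t, u m t ≤ u m 0)
    (hE : Tendsto (fun m => kdvEnergy k (u m) (v m)) atTop (𝓝 (-(8 / 5) * k * a ^ 5))) :
    Tendsto (fun m => ∫ t, (v m t - solitonDeriv k a t) ^ 2) atTop (𝓝 0) := by
  obtain ⟨htop, -, -⟩ := tendsto_peak_and_solitonDefect hk ha h hmass hpeak hE
  have hL2 := tendsto_integral_sub_soliton_sq hk ha h hmass hpeak hE
  have hbound := (hE.add_const (8 / 5 * k * a ^ 5)).add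
    (((htop.const_add (a ^ 2)).const_mul (k ^ 2)).mul hL2)
  refine squeeze_zero' (Eventually.of_forall fun m => integral_nonneg fun t => sq_nonneg _)
    (hpeak.mono fun m hm => (h m).integral_sub_solitonDeriv_sq_le hk ha hm (hmass m)) ?_
  simpa using hbound

end PeakedMinimisingSequence

theorem exists_tendsto_translate_soliton {k a : ℝ} {u v : ℕ → ℝ → ℝ} (hk : 0 < k) (ha : 0 < a)
    (h : ∀ m, IsH1 (u m) (v m)) (hmass : ∀ m, ∫ t, u m t ^ 2 = 8 / 3 * a ^ 3 / k)
    (hE : Tendsto (fun m => kdvEnergy k (u m) (v m)) atTop (𝓝 (-(8 / 5) * k * a ^ 5))) :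
    ∃ x : ℕ → ℝ,
      Tendsto (fun m => ∫ t, (u m (t + x m) - soliton k a t) ^ 2) atTop (𝓝 0) ∧
      Tendsto (fun m => ∫ t, (v m (t + x m) - solitonDeriv k a t) ^ 2) atTop (𝓝 0) := by
  have hmax : ∀ m, ∃ y, kdvEnergy k (u m) (v m) < 0 → ∀ t, u m t ≤ u m y := by
    intro m
    by_cases hm : kdvEnergy k (u m) (v m) < 0
    · obtain ⟨z, hz⟩ := exists_pos_of_kdvEnergy_neg hm
      exact ((h m).exists_forall_le hz).imp fun _ hy _ => hy
    · exact ⟨0, fun hm' => absurd hm' hm⟩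
  choose x hx using hmax
  have hneg : -(8 / 5) * k * a ^ 5 < 0 := by
    have : 0 < 8 / 5 * k * a ^ 5 := by positivity
    linarith
  have hpeak : ∀ᶠ m in atTop, ∀ t, u m (t + x m) ≤ u m (0 + x m) := by
    filter_upwards [hE.eventually_lt_const hneg] with m hm t
    simpa using hx m hm (t + x m)
  have h_translate := fun m => (h m).comp_add_right (x m)
  have hmass_translate : ∀ m, ∫ t, u m (t + x m) ^ 2 = 8 / 3 * a ^ 3 / k := fun m =>
    (integral_add_right_eq_self (fun t => u m t ^ 2) (x m)).trans (hmass m)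
  have hE_translate := hE.congr fun m => (kdvEnergy_comp_add_right k (u m) (v m) (x m)).symm
  exact ⟨x,
    tendsto_integral_sub_soliton_sq hk ha h_translate hmass_translate hpeak hE_translate,
    tendsto_integral_sub_solitonDeriv_sq hk ha h_translate hmass_translate hpeak hE_translate⟩

/-! ### Parameters of the ground state -/

/-- The solitary wave `φ_KdV`, with `w` in place of `ω ^ 2 + 4`. -/
noncomputable def kdvGroundState (c d w x : ℝ) : ℝ :=
  -Real.sqrt 3 * (3 / 16 : ℝ) ^ ((1 : ℝ) / 6) * d ^ ((1 : ℝ) / 3) /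
    (c ^ ((1 : ℝ) / 3) * w ^ ((1 : ℝ) / 3)) *
    sech ((3 / 16 : ℝ) ^ ((1 : ℝ) / 3) * d ^ ((2 : ℝ) / 3) * x /
      (c ^ ((2 : ℝ) / 3) * w ^ ((1 : ℝ) / 6))) ^ 2

/-- The minimal energy `c_KdV`, with `w` in place of `ω ^ 2 + 4`. -/
noncomputable def kdvMinEnergy (c d w : ℝ) : ℝ :=
  -(9 / 5) * (2 / 3 : ℝ) ^ ((1 : ℝ) / 3) * d ^ ((4 : ℝ) / 3) /
    (c ^ ((1 : ℝ) / 3) * w ^ ((5 : ℝ) / 6))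

lemma pow_rpow_eq_pow {x : ℝ} (hx : 0 ≤ x) {m n : ℕ} {s : ℝ} (hs : m * s = n) :
    (x ^ m) ^ s = x ^ n := by
  rw [← Real.rpow_natCast_mul hx, hs, Real.rpow_natCast]

lemma exists_pos_pow_six_eq {x : ℝ} (hx : 0 < x) : ∃ r > 0, r ^ 6 = x :=
  ⟨x ^ ((6 : ℕ) : ℝ)⁻¹, by positivity, Real.rpow_inv_natCast_pow hx.le (by norm_num)⟩

section SolitonParameters

variable {C D W q : ℝ}

lemma two_thirds_rpow_third (hq : 0 < q) (hq3 : q ^ 3 = 3 / 2) :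
    (2 / 3 : ℝ) ^ ((1 : ℝ) / 3) = q⁻¹ := by
  rw [show (2 / 3 : ℝ) = q⁻¹ ^ 3 by rw [inv_pow, hq3]; norm_num,
    pow_rpow_eq_pow (inv_pos.2 hq).le (n := 1) (by norm_num), pow_one]

lemma three_sixteenths_rpow_third (hq : 0 < q) (hq3 : q ^ 3 = 3 / 2) :
    (3 / 16 : ℝ) ^ ((1 : ℝ) / 3) = q / 2 := by
  rw [show (3 / 16 : ℝ) = (q / 2) ^ 3 by rw [div_pow, hq3]; norm_num,
    pow_rpow_eq_pow (half_pos hq).le (n := 1) (by norm_num), pow_one]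

lemma sqrt_three_mul_three_sixteenths_rpow_sixth (hq : 0 < q) (hq3 : q ^ 3 = 3 / 2) :
    √3 * (3 / 16 : ℝ) ^ ((1 : ℝ) / 6) = q ^ 2 := by
  rw [show (1 : ℝ) / 6 = 1 / 3 * (1 / 2) by norm_num, Real.rpow_mul (by norm_num),
    three_sixteenths_rpow_third hq hq3, ← Real.sqrt_eq_rpow, ← Real.sqrt_mul zero_le_three,
    Real.sqrt_eq_iff_eq_sq (by positivity) (by positivity)]
  linear_combination -q * hq3

lemma kdvGroundState_pow_six (hC : 0 < C) (hD : 0 < D) (hW : 0 < W) (hq : 0 < q)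
    (hq3 : q ^ 3 = 3 / 2) :
    kdvGroundState (C ^ 6) (D ^ 6) (W ^ 6) =
      fun x => -soliton (D ^ 3 / C ^ 3) (q * D / (C * W)) x := by
  funext x
  have third : ∀ {r : ℝ}, 0 < r → (r ^ 6) ^ ((1 : ℝ) / 3) = r ^ 2 := fun hr =>
    pow_rpow_eq_pow hr.le (by norm_num)
  have two_thirds : ∀ {r : ℝ}, 0 < r → (r ^ 6) ^ ((2 : ℝ) / 3) = r ^ 4 := fun hr =>
    pow_rpow_eq_pow hr.le (by norm_num)
  have sixth : (W ^ 6) ^ ((1 : ℝ) / 6) = W ^ 1 := pow_rpow_eq_pow hW.le (by norm_num)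
  rw [kdvGroundState, neg_mul, sqrt_three_mul_three_sixteenths_rpow_sixth hq hq3,
    three_sixteenths_rpow_third hq hq3, third hC, third hD, third hW, two_thirds hC,
    two_thirds hD, sixth, soliton]
  have harg : q / 2 * D ^ 4 * x / (C ^ 4 * W ^ 1) =
      D ^ 3 / C ^ 3 * (q * D / (C * W)) / 2 * x := by
    field_simp
  rw [harg]
  field_simp

lemma kdvMinEnergy_pow_six (hC : 0 < C) (hD : 0 < D) (hW : 0 < W) (hq : 0 < q)
    (hq3 : q ^ 3 = 3 / 2) :
    kdvMinEnergy (C ^ 6) (D ^ 6) (W ^ 6) =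
      C ^ 6 / 2 * (-(8 / 5) * (D ^ 3 / C ^ 3) * (q * D / (C * W)) ^ 5) := by
  have hq6 : q ^ 6 = 9 / 4 := by
    rw [show q ^ 6 = (q ^ 3) ^ 2 by ring, hq3]
    norm_num
  rw [kdvMinEnergy, two_thirds_rpow_third hq hq3,
    pow_rpow_eq_pow hD.le (n := 8) (by norm_num), pow_rpow_eq_pow hC.le (n := 2) (by norm_num),
    pow_rpow_eq_pow hW.le (n := 5) (by norm_num)]
  field_simp
  rw [hq6]
  norm_num

lemma kdvMass_pow_six (hC : 0 < C) (hD : 0 < D) (hW : 0 < W) (hq3 : q ^ 3 = 3 / 2) :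
    2 * (2 * (W ^ 6) ^ (-(1 : ℝ) / 2)) = 8 / 3 * (q * D / (C * W)) ^ 3 / (D ^ 3 / C ^ 3) := by
  rw [neg_div, Real.rpow_neg (by positivity), pow_rpow_eq_pow hW.le (n := 3) (by norm_num)]
  field_simp
  rw [hq3]
  norm_num

end SolitonParameters

lemma exists_soliton_parameters {c d w : ℝ} (hc : 0 < c) (hd : 0 < d) (hw : 0 < w) :
    ∃ k a : ℝ, 0 < k ∧ 0 < a ∧ c * k ^ 2 = d ∧
      2 * (2 * w ^ (-(1 : ℝ) / 2)) = 8 / 3 * a ^ 3 / k ∧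
      kdvMinEnergy c d w = c / 2 * (-(8 / 5) * k * a ^ 5) ∧
      kdvGroundState c d w = fun x => -soliton k a x := by
  obtain ⟨C, hC, rfl⟩ := exists_pos_pow_six_eq hc
  obtain ⟨D, hD, rfl⟩ := exists_pos_pow_six_eq hd
  obtain ⟨W, hW, rfl⟩ := exists_pos_pow_six_eq hw
  obtain ⟨q, hq, hq3⟩ : ∃ q > 0, q ^ 3 = (3 / 2 : ℝ) :=
    ⟨(3 / 2) ^ ((3 : ℕ) : ℝ)⁻¹, by positivity,
      Real.rpow_inv_natCast_pow (by norm_num) three_ne_zero⟩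
  refine ⟨D ^ 3 / C ^ 3, q * D / (C * W), by positivity, by positivity, ?_,
    kdvMass_pow_six hC hD hW hq3, kdvMinEnergy_pow_six hC hD hW hq hq3,
    kdvGroundState_pow_six hC hD hW hq hq3⟩
  field_simp

lemma EKdV_eq_mul_kdvEnergy_neg (c k : ℝ) (φ φ' : ℝ → ℝ) :
    EKdV c (c * k ^ 2) φ φ' = c / 2 * kdvEnergy k (fun t => -φ t) (fun t => -φ' t) := by
  rw [EKdV, kdvEnergy, ← integral_const_mul, ← integral_const_mul]
  congr 1 with t
  ring

theorem stmt3_general {c d w : ℝ} (hc : 0 < c) (hd : 0 < d) (hw : 0 < w) {φ φ' : ℕ → ℝ → ℝ}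
    (hmem : ∀ m, H1Pair (φ m) (φ' m))
    (hcon : ∀ m, ∫ x, φ m x ^ 2 = 2 * (2 * w ^ (-(1 : ℝ) / 2)))
    (hmin : Tendsto (fun m => EKdV c d (φ m) (φ' m)) atTop (𝓝 (kdvMinEnergy c d w))) :
    ∃ x : ℕ → ℝ, Tendsto (fun m =>
      (∫ t, (φ m (t + x m) - kdvGroundState c d w t) ^ 2) +
        ∫ t, (φ' m (t + x m) - deriv (kdvGroundState c d w) t) ^ 2) atTop (𝓝 0) := by
  obtain ⟨k, a, hk, ha, rfl, hmass, henergy, hground⟩ := exists_soliton_parameters hc hd hw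
  have h : ∀ m, IsH1 (fun t => -φ m t) (fun t => -φ' m t) := fun m =>
    ((hmem m).isH1 (by rw [hcon, hmass]; positivity)).neg
  have hE : Tendsto (fun m => kdvEnergy k (fun t => -φ m t) (fun t => -φ' m t)) atTop
      (𝓝 (-(8 / 5) * k * a ^ 5)) := by
    have hc2 : c / 2 ≠ 0 := by positivity
    simpa only [EKdV_eq_mul_kdvEnergy_neg, henergy, inv_mul_cancel_left₀ hc2] using
      hmin.const_mul (c / 2)⁻¹
  have hneg_mass : ∀ m, ∫ t, (-φ m t) ^ 2 = 8 / 3 * a ^ 3 / k := fun m => by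
    simp only [neg_sq, hcon, hmass]
  obtain ⟨x, hx, hx'⟩ := exists_tendsto_translate_soliton hk ha h hneg_mass hE
  have hderiv : deriv (fun t => -soliton k a t) = fun t => -solitonDeriv k a t :=
    funext fun t => (hasDerivAt_soliton k a t).neg.deriv
  refine ⟨x, ?_⟩
  have hsum := hx.add hx'
  have hswap : ∀ p q : ℝ, (p - -q) ^ 2 = (-p - q) ^ 2 := fun p q => by ring
  simpa only [hground, hderiv, hswap, add_zero] using hsum

theorem stmt3 (ν₀ ω β : ℝ) (hν₀ : 0 < ν₀) (hβ : ν₀ ^ 2 / 3 < β)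
    (c d αK cK : ℝ) (hc : c = β - ν₀ ^ 2 / 3) (hd : d = ω ^ 2 / 3 + 1)
    (hα : αK = 2 * (ω ^ 2 + 4) ^ (-(1 : ℝ) / 2))
    (hcK : cK = -(9 / 5) * (2 / 3 : ℝ) ^ ((1 : ℝ) / 3) * d ^ ((4 : ℝ) / 3) /
      (c ^ ((1 : ℝ) / 3) * (ω ^ 2 + 4) ^ ((5 : ℝ) / 6)))
    (φK : ℝ → ℝ)
    (hφK : ∀ x, φK x = -Real.sqrt 3 * (3 / 16 : ℝ) ^ ((1 : ℝ) / 6) * d ^ ((1 : ℝ) / 3) /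
      (c ^ ((1 : ℝ) / 3) * (ω ^ 2 + 4) ^ ((1 : ℝ) / 3)) *
      sech ((3 / 16 : ℝ) ^ ((1 : ℝ) / 3) * d ^ ((2 : ℝ) / 3) * x /
        (c ^ ((2 : ℝ) / 3) * (ω ^ 2 + 4) ^ ((1 : ℝ) / 6))) ^ 2)
    (φ : ℕ → ℝ → ℝ) (φ' : ℕ → ℝ → ℝ)
    (hmem : ∀ m, H1Pair (φ m) (φ' m))
    (hcon : ∀ m, (∫ x : ℝ, (φ m x) ^ 2) = 2 * αK)
    (hmin : Tendsto (fun m => EKdV c d (φ m) (φ' m)) atTop (nhds cK)) :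
    ∃ (x : ℕ → ℝ) (mj : ℕ → ℕ) (y : ℝ), StrictMono mj ∧
      Tendsto (fun j =>
        (∫ t : ℝ, (φ (mj j) (t + x (mj j)) - φK (t + y)) ^ 2) +
        ∫ t : ℝ, (φ' (mj j) (t + x (mj j)) - deriv φK (t + y)) ^ 2)
        atTop (nhds 0) := by
  obtain rfl : φK = kdvGroundState c d (ω ^ 2 + 4) := funext hφK
  subst hα hcK
  obtain ⟨x, hx⟩ := stmt3_general (by linarith) (by rw [hd]; positivity) (by positivity)
    hmem hcon hmin
  exact ⟨x, id, 0, strictMono_id, by simpa only [id, add_zero] using hx⟩
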